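/- Let 1<p<∞, η>0 and w ∈ Q(ℝ₊). Let f be a monotone nondecreasing function, continuous on [0,η] and C¹ on (0,η], with f(η) ≤ 1. Then for every u ∈ C_c^1((0,η]): ∫_0^η ( |u'(t)|^p − Λ_p |u(t)|^p / F_η(t)^p ) W_p(t) dt ≥ ∫_0^η ( |u'(t)|^p − Λ_p |u(t)|^p / F_η(t)^p ) W_p(t) f(t) dt; in particular ∫_0^η |u'(t)|^p W_p(t) dt ≥ Λ_p ∫_0^η |u(t)|^p W_p(t) / F_η(t)^p dt. -/

import Mathlib

open MeasureTheory Set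

/-- `f_η(t) = ∫_0^t w(s)⁻¹ ds`  (case `w ∈ Q(ℝ₊)`). -/
noncomputable def fQ (w : ℝ → ℝ) (t : ℝ) : ℝ := ∫ s in (0:ℝ)..t, (w s)⁻¹

/-- `F_η(t) = w(t) f_η(t)`. -/
noncomputable def FQ (w : ℝ → ℝ) (t : ℝ) : ℝ := w t * fQ w t

/-- `W_p(t) = w(t)^(p-1)`. -/
noncomputable def Wp (w : ℝ → ℝ) (p t : ℝ) : ℝ := w t ^ (p - 1)

/-! Let `φ = fQ w`, so that `φ' = 1 / w`, and `k = 1 - 1 / p`. Young's inequality shows that the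
derivative of the potential `k ^ (p - 1) * |u| ^ p * φ ^ (1 - p)` is at most the Hardy integrand
`(|u'| ^ p - k ^ p * |u| ^ p / (w * φ) ^ p) * w ^ (p - 1)`. The potential is nonnegative and
vanishes at `0`, so the Hardy integrand has nonnegative integral over *every* `(0, x]` with `x ≤ η`.
A function whose integrals over all initial segments are nonnegative keeps a nonnegative integral
after multiplication by a nonnegative antitone weight, here `1 - f`, because the weight is a
superposition of indicators of initial segments. -/

section MonotoneWeight

variable {g h : ℝ → ℝ} {a b : ℝ}

lemma setIntegral_nonneg_of_initialSegment {S : Set ℝ}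
    (hg : ∀ x ∈ Icc a b, 0 ≤ ∫ t in a..x, g t)
    (hS : S ⊆ Ioc a b) (hS_initial : ∀ x ∈ S, Ioc a x ⊆ S) : 0 ≤ ∫ t in S, g t := by
  rcases S.eq_empty_or_nonempty with rfl | ⟨x, hx⟩
  · simp
  have hbdd : BddAbove S := ⟨b, fun t ht => (hS ht).2⟩
  have ha_le : a ≤ sSup S := (hS hx).1.le.trans (le_csSup hbdd hx)
  have hle_b : sSup S ≤ b := csSup_le ⟨x, hx⟩ fun t ht => (hS ht).2
  have hIoo : Ioo a (sSup S) ⊆ S := fun t ht =>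
    let ⟨y, hy, hty⟩ := exists_lt_of_lt_csSup ⟨x, hx⟩ ht.2
    hS_initial y hy ⟨ht.1, hty.le⟩
  have hIoc : S ⊆ Ioc a (sSup S) := fun t ht => ⟨(hS ht).1, le_csSup hbdd ht⟩
  have hS_ae : S =ᵐ[volume] Ioc a (sSup S) :=
    hIoc.eventuallyLE.antisymm (Ioo_ae_eq_Ioc.symm.le.trans hIoo.eventuallyLE)
  rw [setIntegral_congr_set hS_ae, ← intervalIntegral.integral_of_le ha_le]
  exact hg _ ⟨ha_le, hle_b⟩

lemma setIntegral_Ioc_indicator_Iio_const {x M : ℝ} (hx : 0 ≤ x) (hxM : x ≤ M) (c : ℝ) :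
    ∫ s in Ioc 0 M, (Iio x).indicator (fun _ => c) s = c * x := by
  have hinter : Iio x ∩ Ioc 0 M = Ioo 0 x := by
    ext s
    exact ⟨fun hs => ⟨hs.2.1, hs.1⟩, fun hs => ⟨hs.2, hs.1, hs.2.le.trans hxM⟩⟩
  rw [integral_indicator_const c measurableSet_Iio, measureReal_restrict_apply measurableSet_Iio,
    hinter, Real.volume_real_Ioo_of_le hx, sub_zero, smul_eq_mul, mul_comm]

lemma integral_mul_nonneg_of_antitoneOn (hab : a ≤ b) (hg_int : IntervalIntegrable g volume a b)
    (hg : ∀ x ∈ Icc a b, 0 ≤ ∫ t in a..x, g t) (hh : AntitoneOn h (Icc a b)) (hhb : 0 ≤ h b) :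
    0 ≤ ∫ t in a..b, g t * h t := by
  set μ := volume.restrict (Ioc a b)
  set ν := volume.restrict (Ioc 0 (h a))
  set D : Set (ℝ × ℝ) := {z | z.2 < h z.1}
  have hh_ae : AEMeasurable h μ :=
    aemeasurable_restrict_of_antitoneOn measurableSet_Ioc (hh.mono Ioc_subset_Icc_self)
  have hD_int : Integrable (D.indicator fun z => g z.1) (μ.prod ν) :=
    (hg_int.1.comp_fst ν).indicator₀
      (nullMeasurableSet_lt measurable_snd.aemeasurable hh_ae.comp_fst)
  have layer_cake : ∀ t ∈ Ioc a b, g t * h t = ∫ s, D.indicator (fun z => g z.1) (t, s) ∂ν := by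
    intro t ht
    have ht_nonneg : 0 ≤ h t := hhb.trans (hh (Ioc_subset_Icc_self ht) ⟨hab, le_rfl⟩ ht.2)
    have ht_le : h t ≤ h a := hh ⟨le_rfl, hab⟩ (Ioc_subset_Icc_self ht) ht.1.le
    exact (setIntegral_Ioc_indicator_Iio_const ht_nonneg ht_le (g t)).symm
  rw [intervalIntegral.integral_of_le hab, setIntegral_congr_fun measurableSet_Ioc layer_cake,
    integral_integral_swap (f := fun t s => D.indicator (fun z => g z.1) (t, s)) hD_int]
  refine integral_nonneg fun s => ?_
  have hslice_meas : NullMeasurableSet {t | s < h t} μ :=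
    nullMeasurableSet_lt aemeasurable_const hh_ae
  have hslice_int : ∫ t, D.indicator (fun z => g z.1) (t, s) ∂μ =
      ∫ t in {t | s < h t} ∩ Ioc a b, g t := by
    rw [← Measure.restrict_restrict₀ hslice_meas, ← integral_indicator₀ hslice_meas]
    rfl
  rw [hslice_int]
  refine setIntegral_nonneg_of_initialSegment hg inter_subset_right fun x hx t ht => ?_
  have ht_mem : t ∈ Ioc a b := ⟨ht.1, ht.2.trans hx.2.2⟩
  exact ⟨hx.1.trans_le (hh (Ioc_subset_Icc_self ht_mem) (Ioc_subset_Icc_self hx.2) ht.2), ht_mem⟩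

lemma integral_mul_le_integral_of_monotoneOn (hab : a ≤ b)
    (hg_int : IntervalIntegrable g volume a b) (hg : ∀ x ∈ Icc a b, 0 ≤ ∫ t in a..x, g t)
    (hh : MonotoneOn h (Icc a b)) (hhb : h b ≤ 1) :
    ∫ t in a..b, g t * h t ≤ ∫ t in a..b, g t := by
  have hgh_int : IntervalIntegrable (fun t => g t * h t) volume a b := by
    refine (intervalIntegrable_iff_integrableOn_Ioc_of_le hab).2 <| hg_int.1.mul_bdd
      (c := max |h a| |h b|) (aemeasurable_restrict_of_monotoneOn measurableSet_Ioc
        (hh.mono Ioc_subset_Icc_self)).aestronglyMeasurable ?_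
    filter_upwards [ae_restrict_mem measurableSet_Ioc] with t ht
    have ht_mem := Ioc_subset_Icc_self ht
    exact abs_le_max_abs_abs (hh ⟨le_rfl, hab⟩ ht_mem ht.1.le) (hh ht_mem ⟨hab, le_rfl⟩ ht.2)
  have hdiff : 0 ≤ ∫ t in a..b, g t * (1 - h t) :=
    integral_mul_nonneg_of_antitoneOn hab hg_int hg
      (fun x hx y hy hxy => sub_le_sub_left (hh hx hy hxy) 1) (sub_nonneg.2 hhb)
  simp only [mul_sub, mul_one] at hdiff
  rwa [intervalIntegral.integral_sub hg_int hgh_int, sub_nonneg] at hdiff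

end MonotoneWeight

lemma intervalIntegrable_of_continuousOn_Ioc_of_eq_zero {g : ℝ → ℝ} {a b c : ℝ} (hab : a ≤ b)
    (hac : a < c) (hg : ContinuousOn g (Ioc a b)) (hg_zero : ∀ t ∈ Ioc a b, t ≤ c → g t = 0) :
    IntervalIntegrable g volume a b := by
  have hg_int : IntegrableOn g (Icc c b) :=
    (hg.mono fun t ht => ⟨hac.trans_le ht.1, ht.2⟩).integrableOn_Icc
  rw [intervalIntegrable_iff_integrableOn_Ioc_of_le hab]
  refine hg_int.of_forall_sdiff_eq_zero measurableSet_Ioc fun t ht => ?_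
  exact hg_zero t ht.1 (not_lt.1 fun hct => ht.2 ⟨hct.le, ht.1.2⟩)

section Picone

variable {p x y w φ : ℝ}

lemma mul_mul_rpow_sub_one_le (hp : 1 < p) (hx : 0 ≤ x) (hy : 0 ≤ y) :
    p * (x * y ^ (p - 1)) ≤ x ^ p + (p - 1) * y ^ p := by
  have hp1 : p - 1 ≠ 0 := (sub_pos.2 hp).ne'
  have hexp : (p - 1) * p.conjExponent = p := by
    rw [Real.conjExponent]
    field_simp
  have hyoung := Real.young_inequality_of_nonneg hx (Real.rpow_nonneg hy (p - 1))
    (Real.HolderConjugate.conjExponent hp)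
  rw [← Real.rpow_mul hy, hexp, Real.conjExponent] at hyoung
  calc p * (x * y ^ (p - 1)) ≤ p * (x ^ p / p + y ^ p / (p / (p - 1))) := by gcongr
    _ = x ^ p + (p - 1) * y ^ p := by field_simp

lemma mul_mul_rpow_sub_one_le_weighted (hp : 1 < p) (hw : 0 < w) (hx : 0 ≤ x) (hy : 0 ≤ y) :
    p * (x * y ^ (p - 1)) ≤ x ^ p * w ^ (p - 1) + (p - 1) * (y ^ p / w) := by
  calc p * (x * y ^ (p - 1)) = p * (x * (y / w) ^ (p - 1)) * w ^ (p - 1) := by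
        rw [Real.div_rpow hy hw.le]
        field_simp
    _ ≤ (x ^ p + (p - 1) * (y / w) ^ p) * w ^ (p - 1) := by
        gcongr
        exact mul_mul_rpow_sub_one_le hp hx (by positivity)
    _ = x ^ p * w ^ (p - 1) + (p - 1) * (y ^ p / w) := by
        rw [Real.div_rpow hy hw.le, Real.rpow_sub_one hw.ne']
        field_simp

lemma abs_rpow_sub_two_mul_self_mul_le (hp : p ≠ 1) :
    |y| ^ (p - 2) * y * x ≤ |x| * |y| ^ (p - 1) := by
  calc |y| ^ (p - 2) * y * x ≤ |(|y| ^ (p - 2) * y * x)| := le_abs_self _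
    _ = |x| * (|y| ^ (p - 2) * |y|) := by
        rw [abs_mul, abs_mul, abs_of_nonneg (by positivity : 0 ≤ |y| ^ (p - 2)), mul_comm]
    _ = |x| * |y| ^ (p - 1) := by
        rw [← Real.rpow_add_one' (abs_nonneg y) (by contrapose! hp; linarith)]
        ring_nf

lemma potential_deriv_le (hp : 1 < p) (hφ : 0 < φ) :
    (1 - 1 / p) ^ (p - 1) * (p * |y| ^ (p - 2) * y * x * φ ^ (1 - p) +
        |y| ^ p * (w⁻¹ * (1 - p) * φ ^ (1 - p - 1)))
      ≤ p * (|x| * ((1 - 1 / p) * |y| / φ) ^ (p - 1))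
        - p * (((1 - 1 / p) * |y| / φ) ^ p / w) := by
  have hp0 : 0 < p := zero_lt_one.trans hp
  have hk : 0 < 1 - 1 / p := sub_pos.2 ((div_lt_one hp0).2 hp)
  have hpk : p - 1 = p * (1 - 1 / p) := by field_simp
  set k := 1 - 1 / p
  set c := k * |y| / φ
  have hc_rpow (q : ℝ) : c ^ q = k ^ q * |y| ^ q / φ ^ q := by
    rw [Real.div_rpow (by positivity) hφ.le, Real.mul_rpow hk.le (abs_nonneg y)]
  have hcross : k ^ (p - 1) * φ ^ (1 - p) * |y| ^ (p - 1) = c ^ (p - 1) := by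
    rw [hc_rpow, ← neg_sub p 1, Real.rpow_neg hφ.le]
    ring
  have hdiag : k * (k ^ (p - 1) * |y| ^ p * φ ^ (1 - p - 1)) = c ^ p := by
    rw [hc_rpow, show 1 - p - 1 = -p by ring, Real.rpow_neg hφ.le, Real.rpow_sub_one hk.ne']
    field_simp
  calc k ^ (p - 1) * (p * |y| ^ (p - 2) * y * x * φ ^ (1 - p) +
        |y| ^ p * (w⁻¹ * (1 - p) * φ ^ (1 - p - 1)))
      = p * (k ^ (p - 1) * φ ^ (1 - p)) * (|y| ^ (p - 2) * y * x)
        - (p - 1) * (k ^ (p - 1) * |y| ^ p * φ ^ (1 - p - 1)) / w := by ring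
    _ ≤ p * (k ^ (p - 1) * φ ^ (1 - p)) * (|x| * |y| ^ (p - 1))
        - (p - 1) * (k ^ (p - 1) * |y| ^ p * φ ^ (1 - p - 1)) / w := by
        gcongr _ * ?_ - _
        exact abs_rpow_sub_two_mul_self_mul_le hp.ne'
    _ = p * (|x| * c ^ (p - 1)) - p * (c ^ p / w) := by
        rw [← hcross, ← hdiag]
        linear_combination -(k ^ (p - 1) * |y| ^ p * φ ^ (1 - p - 1) / w) * hpk

lemma picone_le (hp : 1 < p) (hw : 0 < w) (hφ : 0 < φ) :
    (1 - 1 / p) ^ (p - 1) * (p * |y| ^ (p - 2) * y * x * φ ^ (1 - p) +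
        |y| ^ p * (w⁻¹ * (1 - p) * φ ^ (1 - p - 1)))
      ≤ (|x| ^ p - (1 - 1 / p) ^ p * |y| ^ p / (w * φ) ^ p) * w ^ (p - 1) := by
  refine (potential_deriv_le hp hφ).trans ?_
  have hk : 0 ≤ 1 - 1 / p := sub_nonneg.2 ((div_le_one (zero_lt_one.trans hp)).2 hp.le)
  set k := 1 - 1 / p
  set c := k * |y| / φ with hc_def
  have hc : 0 ≤ c := by positivity
  have hhardy : k ^ p * |y| ^ p / (w * φ) ^ p * w ^ (p - 1) = c ^ p / w := by
    rw [hc_def, Real.div_rpow (by positivity) hφ.le, Real.mul_rpow hk (abs_nonneg y),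
      Real.mul_rpow hw.le hφ.le, Real.rpow_sub_one hw.ne']
    field_simp
  have hyoung := mul_mul_rpow_sub_one_le_weighted hp hw (abs_nonneg x) hc
  rw [sub_mul (|x| ^ p), hhardy]
  linarith

end Picone

/-- `w` is a positive continuous weight on `(0, η]` with integrable reciprocal: the part of
`w ∈ Q(ℝ₊)` that enters Hardy's inequality on `(0, η]`. -/
structure IsHardyWeight (w : ℝ → ℝ) (η : ℝ) : Prop where
  pos : ∀ t ∈ Ioc 0 η, 0 < w t
  continuousOn : ContinuousOn w (Ioc 0 η)
  integrableOn_inv : IntegrableOn (fun t => (w t)⁻¹) (Ioc 0 η)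

/-- `u` belongs to `C_c^1((0,η])` and has derivative `u'` there. The values of `u` and `u'` outside
`(0, η]` are arbitrary, and the derivative at `η` is one-sided. -/
structure IsC1CompactSupport (u u' : ℝ → ℝ) (η : ℝ) : Prop where
  hasDerivWithinAt : ∀ t ∈ Ioc 0 η, HasDerivWithinAt u (u' t) (Ioc 0 η) t
  continuousOn_deriv : ContinuousOn u' (Ioc 0 η)
  eq_zero_near_zero : ∃ a, 0 < a ∧ ∀ t ∈ Ioc 0 a, u t = 0

/-- The integrand, weight `Wp w p` included, of the Hardy difference of `u` with derivative `u'`. -/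
noncomputable def hardyIntegrand (w : ℝ → ℝ) (p : ℝ) (u u' : ℝ → ℝ) (t : ℝ) : ℝ :=
  (|u' t| ^ p - (1 - 1 / p) ^ p * |u t| ^ p / FQ w t ^ p) * Wp w p t

/-- The Picone potential of `u`: the nonnegative function, vanishing at `0`, whose derivative is
dominated by `hardyIntegrand`. -/
noncomputable def hardyPotential (w : ℝ → ℝ) (p : ℝ) (u : ℝ → ℝ) (t : ℝ) : ℝ :=
  (1 - 1 / p) ^ (p - 1) * (|u t| ^ p * fQ w t ^ (1 - p))

lemma hardyIntegrand_eq_sub (w : ℝ → ℝ) (p : ℝ) (u u' : ℝ → ℝ) :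
    hardyIntegrand w p u u' = fun t => |u' t| ^ p * Wp w p t -
      (1 - 1 / p) ^ p * (|u t| ^ p * Wp w p t / FQ w t ^ p) := by
  funext t
  rw [hardyIntegrand]
  ring

namespace IsHardyWeight

variable {w : ℝ → ℝ} {p η t : ℝ}

lemma mono {x : ℝ} (hw : IsHardyWeight w η) (hx : x ≤ η) : IsHardyWeight w x where
  pos t ht := hw.pos t (Ioc_subset_Ioc_right hx ht)
  continuousOn := hw.continuousOn.mono (Ioc_subset_Ioc_right hx)
  integrableOn_inv := hw.integrableOn_inv.mono_set (Ioc_subset_Ioc_right hx)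

lemma intervalIntegrable_inv (hw : IsHardyWeight w η) (ht : t ∈ Ioc 0 η) :
    IntervalIntegrable (fun s => (w s)⁻¹) volume 0 t := by
  rw [intervalIntegrable_iff_integrableOn_Ioc_of_le ht.1.le]
  exact (hw.mono ht.2).integrableOn_inv

lemma fQ_pos (hw : IsHardyWeight w η) (ht : t ∈ Ioc 0 η) : 0 < fQ w t :=
  intervalIntegral.intervalIntegral_pos_of_pos_on (hw.intervalIntegrable_inv ht)
    (fun s hs => inv_pos.2 (hw.pos s ⟨hs.1, hs.2.le.trans ht.2⟩)) ht.1

lemma FQ_pos (hw : IsHardyWeight w η) (ht : t ∈ Ioc 0 η) : 0 < FQ w t :=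
  mul_pos (hw.pos t ht) (hw.fQ_pos ht)

lemma hasDerivAt_fQ (hw : IsHardyWeight w η) (ht : t ∈ Ioo 0 η) :
    HasDerivAt (fQ w) (w t)⁻¹ t := by
  have hinv : ContinuousOn (fun s => (w s)⁻¹) (Ioo 0 η) :=
    (hw.continuousOn.inv₀ fun s hs => (hw.pos s hs).ne').mono Ioo_subset_Ioc_self
  exact intervalIntegral.integral_hasDerivAt_right
    (hw.intervalIntegrable_inv (Ioo_subset_Ioc_self ht))
    (hinv.stronglyMeasurableAtFilter isOpen_Ioo t ht) (hinv.continuousAt (isOpen_Ioo.mem_nhds ht))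

lemma continuousOn_fQ (hw : IsHardyWeight w η) : ContinuousOn (fQ w) (Ioc 0 η) := by
  intro t ht
  have hint : IntegrableOn (fun s => (w s)⁻¹) (uIcc 0 η) := by
    rw [uIcc_of_le (ht.1.le.trans ht.2), integrableOn_Icc_iff_integrableOn_Ioc]
    exact hw.integrableOn_inv
  exact (intervalIntegral.continuousOn_primitive_interval hint).mono
    (Ioc_subset_Icc_self.trans Icc_subset_uIcc) t ht

lemma continuousOn_FQ (hw : IsHardyWeight w η) : ContinuousOn (FQ w) (Ioc 0 η) :=
  hw.continuousOn.mul hw.continuousOn_fQ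

lemma continuousOn_Wp (hw : IsHardyWeight w η) : ContinuousOn (Wp w p) (Ioc 0 η) :=
  hw.continuousOn.rpow_const fun t ht => Or.inl (hw.pos t ht).ne'

end IsHardyWeight

namespace IsC1CompactSupport

variable {u u' : ℝ → ℝ} {η t : ℝ}

lemma mono {x : ℝ} (hu : IsC1CompactSupport u u' η) (hx : x ≤ η) : IsC1CompactSupport u u' x where
  hasDerivWithinAt t ht :=
    (hu.hasDerivWithinAt t (Ioc_subset_Ioc_right hx ht)).mono (Ioc_subset_Ioc_right hx)
  continuousOn_deriv := hu.continuousOn_deriv.mono (Ioc_subset_Ioc_right hx)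
  eq_zero_near_zero := hu.eq_zero_near_zero

lemma continuousOn (hu : IsC1CompactSupport u u' η) : ContinuousOn u (Ioc 0 η) :=
  fun t ht => (hu.hasDerivWithinAt t ht).continuousWithinAt

lemma hasDerivAt (hu : IsC1CompactSupport u u' η) (ht : t ∈ Ioo 0 η) : HasDerivAt u (u' t) t :=
  (hu.hasDerivWithinAt t (Ioo_subset_Ioc_self ht)).hasDerivAt (Ioc_mem_nhds ht.1 ht.2)

lemma deriv_eq_zero {a : ℝ} (hu : IsC1CompactSupport u u' η) (ha : ∀ t ∈ Ioc 0 a, u t = 0)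
    (ht : t ∈ Ioc 0 η) (hta : t ≤ a) : u' t = 0 := by
  have ht_mem : t ∈ Ioc 0 t := ⟨ht.1, le_rfl⟩
  have hconst : HasDerivWithinAt u 0 (Ioc 0 t) t :=
    (hasDerivWithinAt_const t (Ioc 0 t) (0 : ℝ)).congr_of_mem
      (fun s hs => ha s ⟨hs.1, hs.2.trans hta⟩) ht_mem
  exact (uniqueDiffOn_Ioc 0 t t ht_mem).eq_deriv _
    ((hu.hasDerivWithinAt t ht).mono (Ioc_subset_Ioc_right ht.2)) hconst

end IsC1CompactSupport

section Hardy

variable {w u u' f : ℝ → ℝ} {p η t : ℝ}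

lemma intervalIntegrable_abs_deriv_rpow_mul_Wp (hp : 0 < p) (hη : 0 ≤ η)
    (hw : IsHardyWeight w η) (hu : IsC1CompactSupport u u' η) :
    IntervalIntegrable (fun t => |u' t| ^ p * Wp w p t) volume 0 η := by
  obtain ⟨a, ha, hu_zero⟩ := hu.eq_zero_near_zero
  have hcont : ContinuousOn (fun t => |u' t| ^ p * Wp w p t) (Ioc 0 η) :=
    (hu.continuousOn_deriv.abs.rpow_const fun _ _ => Or.inr hp.le).mul hw.continuousOn_Wp
  refine intervalIntegrable_of_continuousOn_Ioc_of_eq_zero hη ha hcont fun t ht hta => ?_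
  rw [hu.deriv_eq_zero hu_zero ht hta, abs_zero, Real.zero_rpow hp.ne', zero_mul]

lemma intervalIntegrable_abs_rpow_mul_Wp_div_FQ_rpow (hp : 0 < p) (hη : 0 ≤ η)
    (hw : IsHardyWeight w η) (hu : IsC1CompactSupport u u' η) :
    IntervalIntegrable (fun t => |u t| ^ p * Wp w p t / FQ w t ^ p) volume 0 η := by
  obtain ⟨a, ha, hu_zero⟩ := hu.eq_zero_near_zero
  have hFQ_cont : ContinuousOn (fun t => FQ w t ^ p) (Ioc 0 η) :=
    hw.continuousOn_FQ.rpow_const fun _ _ => Or.inr hp.le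
  have hcont : ContinuousOn (fun t => |u t| ^ p * Wp w p t / FQ w t ^ p) (Ioc 0 η) :=
    ((hu.continuousOn.abs.rpow_const fun _ _ => Or.inr hp.le).mul hw.continuousOn_Wp).div
      hFQ_cont fun t ht => (Real.rpow_pos_of_pos (hw.FQ_pos ht) p).ne'
  refine intervalIntegrable_of_continuousOn_Ioc_of_eq_zero hη ha hcont fun t ht hta => ?_
  rw [hu_zero t ⟨ht.1, hta⟩, abs_zero, Real.zero_rpow hp.ne', zero_mul, zero_div]

lemma intervalIntegrable_hardyIntegrand (hp : 0 < p) (hη : 0 ≤ η)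
    (hw : IsHardyWeight w η) (hu : IsC1CompactSupport u u' η) :
    IntervalIntegrable (hardyIntegrand w p u u') volume 0 η := by
  rw [hardyIntegrand_eq_sub]
  exact (intervalIntegrable_abs_deriv_rpow_mul_Wp hp hη hw hu).sub
    ((intervalIntegrable_abs_rpow_mul_Wp_div_FQ_rpow hp hη hw hu).const_mul _)

lemma hardyPotential_nonneg (hp : 1 ≤ p) (hφ : 0 ≤ fQ w t) : 0 ≤ hardyPotential w p u t := by
  have hk : 0 ≤ 1 - 1 / p := sub_nonneg.2 ((div_le_one (by positivity)).2 hp)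
  unfold hardyPotential
  positivity

/- Here `fQ w 0 = 0` is raised to the negative power `1 - p`, and Mathlib's value of that is `0`. -/
lemma hardyPotential_zero (hp : p ≠ 1) : hardyPotential w p u 0 = 0 := by
  simp [hardyPotential, fQ, Real.zero_rpow (sub_ne_zero.2 hp.symm)]

lemma continuousOn_hardyPotential (hp : 1 < p) (hw : IsHardyWeight w η)
    (hu : IsC1CompactSupport u u' η) : ContinuousOn (hardyPotential w p u) (Icc 0 η) := by
  have hp0 : 0 < p := zero_lt_one.trans hp
  obtain ⟨a, ha, hu_zero⟩ := hu.eq_zero_near_zero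
  have hzero : ∀ t ∈ Icc 0 a, hardyPotential w p u t = 0 := by
    intro t ht
    rcases ht.1.eq_or_lt with rfl | ht_pos
    · exact hardyPotential_zero hp.ne'
    · rw [hardyPotential, hu_zero t ⟨ht_pos, ht.2⟩, abs_zero, Real.zero_rpow hp0.ne', zero_mul,
        mul_zero]
  have hcont : ContinuousOn (hardyPotential w p u) (Ioc 0 η) :=
    continuousOn_const.mul <| (hu.continuousOn.abs.rpow_const fun _ _ => Or.inr hp0.le).mul <|
      hw.continuousOn_fQ.rpow_const fun t ht => Or.inl (hw.fQ_pos ht).ne'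
  intro t ht
  rcases ht.1.eq_or_lt with rfl | ht_pos
  · refine continuousWithinAt_const.congr_of_eventuallyEq ?_ (hzero 0 ⟨le_rfl, ha.le⟩)
    filter_upwards [self_mem_nhdsWithin, mem_nhdsWithin_of_mem_nhds (Iio_mem_nhds ha)]
      with s hs hsa using hzero s ⟨hs.1, hsa.le⟩
  · refine (hcont t ⟨ht_pos, ht.2⟩).mono_of_mem_nhdsWithin ?_
    filter_upwards [self_mem_nhdsWithin, mem_nhdsWithin_of_mem_nhds (Ioi_mem_nhds ht_pos)]
      with s hs hs_pos using ⟨hs_pos, hs.2⟩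

lemma hasDerivAt_hardyPotential (hp : 1 < p) (hw : IsHardyWeight w η)
    (hu : IsC1CompactSupport u u' η) (ht : t ∈ Ioo 0 η) :
    HasDerivAt (hardyPotential w p u) ((1 - 1 / p) ^ (p - 1) *
      (p * |u t| ^ (p - 2) * u t * u' t * fQ w t ^ (1 - p) +
        |u t| ^ p * ((w t)⁻¹ * (1 - p) * fQ w t ^ (1 - p - 1)))) t :=
  (((hasDerivAt_abs_rpow (u t) hp).comp t (hu.hasDerivAt ht)).mul
    ((hw.hasDerivAt_fQ ht).rpow_const
      (Or.inl (hw.fQ_pos (Ioo_subset_Ioc_self ht)).ne'))).const_mul _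

theorem integral_hardyIntegrand_nonneg (hp : 1 < p) (hη : 0 ≤ η) (hw : IsHardyWeight w η)
    (hu : IsC1CompactSupport u u' η) : 0 ≤ ∫ t in (0 : ℝ)..η, hardyIntegrand w p u u' t := by
  have hint : IntegrableOn (hardyIntegrand w p u u') (Icc 0 η) :=
    (intervalIntegrable_iff_integrableOn_Icc_of_le hη).1
      (intervalIntegrable_hardyIntegrand (zero_lt_one.trans hp) hη hw hu)
  have hφ : 0 ≤ fQ w η := by
    rcases hη.eq_or_lt with rfl | hη_pos
    · simp [fQ]
    · exact (hw.fQ_pos ⟨hη_pos, le_rfl⟩).le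
  calc 0 ≤ hardyPotential w p u η := hardyPotential_nonneg hp.le hφ
    _ = hardyPotential w p u η - hardyPotential w p u 0 := by
        rw [hardyPotential_zero hp.ne', sub_zero]
    _ ≤ ∫ t in (0 : ℝ)..η, hardyIntegrand w p u u' t :=
        intervalIntegral.sub_le_integral_of_hasDeriv_right_of_le hη
          (continuousOn_hardyPotential hp hw hu)
          (fun t ht => (hasDerivAt_hardyPotential hp hw hu ht).hasDerivWithinAt) hint
          fun t ht => picone_le hp (hw.pos t (Ioo_subset_Ioc_self ht))
            (hw.fQ_pos (Ioo_subset_Ioc_self ht))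

theorem weighted_hardy_inequality (hp : 1 < p) (hη : 0 ≤ η) (hw : IsHardyWeight w η)
    (hu : IsC1CompactSupport u u' η) :
    (1 - 1 / p) ^ p * ∫ t in (0 : ℝ)..η, |u t| ^ p * Wp w p t / FQ w t ^ p ≤
      ∫ t in (0 : ℝ)..η, |u' t| ^ p * Wp w p t := by
  have hp0 : 0 < p := zero_lt_one.trans hp
  have hnonneg := integral_hardyIntegrand_nonneg hp hη hw hu
  rwa [hardyIntegrand_eq_sub, intervalIntegral.integral_sub
      (intervalIntegrable_abs_deriv_rpow_mul_Wp hp0 hη hw hu)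
      ((intervalIntegrable_abs_rpow_mul_Wp_div_FQ_rpow hp0 hη hw hu).const_mul _),
    intervalIntegral.integral_const_mul, sub_nonneg] at hnonneg

theorem integral_hardyIntegrand_mul_le_of_monotoneOn (hp : 1 < p) (hη : 0 ≤ η)
    (hw : IsHardyWeight w η) (hu : IsC1CompactSupport u u' η) (hf : MonotoneOn f (Icc 0 η))
    (hfη : f η ≤ 1) :
    ∫ t in (0 : ℝ)..η, hardyIntegrand w p u u' t * f t ≤
      ∫ t in (0 : ℝ)..η, hardyIntegrand w p u u' t :=
  integral_mul_le_integral_of_monotoneOn hη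
    (intervalIntegrable_hardyIntegrand (zero_lt_one.trans hp) hη hw hu)
    (fun _ hx => integral_hardyIntegrand_nonneg hp hx.1 (hw.mono hx.2) (hu.mono hx.2)) hf hfη

end Hardy

theorem hardy_monotone_comparison_general {p η : ℝ} (hp : 1 < p) (hη : 0 ≤ η) {w : ℝ → ℝ}
    (hw : IsHardyWeight w η) {f : ℝ → ℝ} (hf_mono : MonotoneOn f (Icc 0 η)) (hfη : f η ≤ 1)
    {u u' : ℝ → ℝ} (hu : IsC1CompactSupport u u' η) :
    (∫ t in (0 : ℝ)..η, hardyIntegrand w p u u' t * f t ≤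
      ∫ t in (0 : ℝ)..η, hardyIntegrand w p u u' t) ∧
    (1 - 1 / p) ^ p * ∫ t in (0 : ℝ)..η, |u t| ^ p * Wp w p t / FQ w t ^ p ≤
      ∫ t in (0 : ℝ)..η, |u' t| ^ p * Wp w p t :=
  ⟨integral_hardyIntegrand_mul_le_of_monotoneOn hp hη hw hu hf_mono hfη,
    weighted_hardy_inequality hp hη hw hu⟩

/-- For `w ∈ Q(ℝ₊)` and a nondecreasing `f` on `[0,η]`, continuous on
`[0,η]`, `C¹` on `(0,η]`, with `f(η) ≤ 1`, the Hardy difference dominates its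
`f`-weighted version; in particular the weighted Hardy inequality holds. -/
theorem hardy_monotone_comparison (p η : ℝ) (hp : 1 < p) (hη : 0 < η)
    (w : ℝ → ℝ)
    (hw_pos : ∀ t, 0 < t → 0 < w t)
    (hw_smooth : ContDiffOn ℝ 1 w (Set.Ioi 0))
    (hw_lim : ∃ a : ENNReal, Filter.Tendsto (fun t => ENNReal.ofReal (w t))
        (nhdsWithin (0:ℝ) (Set.Ioi 0)) (nhds a))
    (hwQ : ∀ b, 0 < b → MeasureTheory.IntegrableOn (fun s => (w s)⁻¹) (Set.Ioo 0 b))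
    (f : ℝ → ℝ)
    (hf_mono : MonotoneOn f (Set.Icc (0:ℝ) η))
    (hf_cont : ContinuousOn f (Set.Icc (0:ℝ) η))
    (hf_C1 : ContDiffOn ℝ 1 f (Set.Ioc (0:ℝ) η))
    (hfη : f η ≤ 1)
    (u u' : ℝ → ℝ)
    (hu : ∀ t ∈ Set.Ioc (0:ℝ) η, HasDerivWithinAt u (u' t) (Set.Ioc (0:ℝ) η) t)
    (hu'c : ContinuousOn u' (Set.Ioc (0:ℝ) η))
    (hsupp : ∃ a, 0 < a ∧ ∀ t ≤ a, u t = 0) :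
    ((∫ t in (0:ℝ)..η,
        (|u' t| ^ p - (1 - 1 / p) ^ p * |u t| ^ p / FQ w t ^ p) * Wp w p t)
      ≥ ∫ t in (0:ℝ)..η,
          (|u' t| ^ p - (1 - 1 / p) ^ p * |u t| ^ p / FQ w t ^ p) * Wp w p t * f t)
    ∧ (∫ t in (0:ℝ)..η, |u' t| ^ p * Wp w p t)
      ≥ (1 - 1 / p) ^ p * ∫ t in (0:ℝ)..η, |u t| ^ p * Wp w p t / FQ w t ^ p :=
  hardy_monotone_comparison_general hp hη.le
    { pos := fun t ht => hw_pos t ht.1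
      continuousOn := hw_smooth.continuousOn.mono Ioc_subset_Ioi_self
      integrableOn_inv := (integrableOn_Ioc_iff_integrableOn_Ioo).2 (hwQ η hη) }
    hf_mono hfη
    { hasDerivWithinAt := hu
      continuousOn_deriv := hu'c
      eq_zero_near_zero := hsupp.imp fun _ ha => ⟨ha.1, fun t ht => ha.2 t ht.2⟩ }
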